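/- If A is a 3×3 real orthogonal matrix (A·Aᵀ = I), then the 6×6 matrix Ã(A) is orthogonal: Ã(A)·Ã(A)ᵀ = I. If moreover det A = 1 (A ∈ SO(3)), then det Ã(A) = 1, i.e. Ã(A) ∈ SO(6). -/

import Mathlib

/-!
The map `Ã` is the second symmetric power of `A` written in an orthonormal basis of the symmetric
matrices. Hence it is multiplicative, unital, and commutes with transposition, and orthogonality
of `Ã(A)` follows by applying `Ã` to `A * Aᵀ = 1`.

For the determinant, `det Ã(A) = (det A) ^ 4` for every invertible `A`. Both sides are
multiplicative, so it suffices to check diagonal matrices, where `Ã` is diagonal, and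
transvections `T(c)`. Conjugating `T(c)` by a diagonal matrix gives `T(2c) = T(c) ^ 2`, so
`x = det Ã(T(c))` satisfies `x ^ 2 = x`; being nonzero, it equals `1`.
-/

open Matrix Real

/-- The Kelvin-notation `6×6` matrix `Ã(A)` associated to a `3×3` matrix `A`.
Rows/columns `0,1,2` correspond to index pairs `(1,1),(2,2),(3,3)` and rows/columns
`3,4,5` to the pairs `(2,3),(1,3),(1,2)` (with `1..3` rendered as `0..2` in Lean). -/
noncomputable def kelvinMap (A : Matrix (Fin 3) (Fin 3) ℝ) : Matrix (Fin 6) (Fin 6) ℝ :=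
  !![A 0 0 ^ 2, A 0 1 ^ 2, A 0 2 ^ 2,
       Real.sqrt 2 * (A 0 1 * A 0 2), Real.sqrt 2 * (A 0 0 * A 0 2), Real.sqrt 2 * (A 0 0 * A 0 1);
     A 1 0 ^ 2, A 1 1 ^ 2, A 1 2 ^ 2,
       Real.sqrt 2 * (A 1 1 * A 1 2), Real.sqrt 2 * (A 1 0 * A 1 2), Real.sqrt 2 * (A 1 0 * A 1 1);
     A 2 0 ^ 2, A 2 1 ^ 2, A 2 2 ^ 2,
       Real.sqrt 2 * (A 2 1 * A 2 2), Real.sqrt 2 * (A 2 0 * A 2 2), Real.sqrt 2 * (A 2 0 * A 2 1);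
     Real.sqrt 2 * (A 1 0 * A 2 0), Real.sqrt 2 * (A 1 1 * A 2 1), Real.sqrt 2 * (A 1 2 * A 2 2),
       A 1 1 * A 2 2 + A 1 2 * A 2 1, A 1 0 * A 2 2 + A 1 2 * A 2 0, A 1 0 * A 2 1 + A 1 1 * A 2 0;
     Real.sqrt 2 * (A 0 0 * A 2 0), Real.sqrt 2 * (A 0 1 * A 2 1), Real.sqrt 2 * (A 0 2 * A 2 2),
       A 0 1 * A 2 2 + A 0 2 * A 2 1, A 0 0 * A 2 2 + A 0 2 * A 2 0, A 0 0 * A 2 1 + A 0 1 * A 2 0;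
     Real.sqrt 2 * (A 0 0 * A 1 0), Real.sqrt 2 * (A 0 1 * A 1 1), Real.sqrt 2 * (A 0 2 * A 1 2),
       A 0 1 * A 1 2 + A 0 2 * A 1 1, A 0 0 * A 1 2 + A 0 2 * A 1 0, A 0 0 * A 1 1 + A 0 1 * A 1 0]

/-- The Kelvin vector `v(S) = (S₁₁, S₂₂, S₃₃, √2·S₂₃, √2·S₁₃, √2·S₁₂)` of a `3×3` matrix `S`. -/
noncomputable def kelvinVec (S : Matrix (Fin 3) (Fin 3) ℝ) : Fin 6 → ℝ :=
  ![S 0 0, S 1 1, S 2 2, Real.sqrt 2 * S 1 2, Real.sqrt 2 * S 0 2, Real.sqrt 2 * S 0 1]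

theorem kelvinMap_one : kelvinMap 1 = 1 := by
  ext i j
  fin_cases i <;> fin_cases j <;> simp [kelvinMap]

theorem kelvinMap_transpose (A : Matrix (Fin 3) (Fin 3) ℝ) :
    kelvinMap Aᵀ = (kelvinMap A)ᵀ := by
  ext i j
  fin_cases i <;> fin_cases j <;> simp [kelvinMap] <;> ring

set_option maxHeartbeats 2000000 in
/-- Functoriality of the second symmetric power. -/
theorem kelvinMap_mul (A B : Matrix (Fin 3) (Fin 3) ℝ) :
    kelvinMap (A * B) = kelvinMap A * kelvinMap B := by
  have hs : √(2 : ℝ) ^ 2 = 2 := Real.sq_sqrt (by norm_num)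
  ext i j
  -- Each entry is a polynomial identity once `√2 ^ 2` is replaced by `2`.
  fin_cases i <;> fin_cases j <;>
    simp [kelvinMap, Matrix.mul_apply, Fin.sum_univ_succ] <;> ring_nf <;> (try rw [hs])

theorem kelvinMap_diagonal (d : Fin 3 → ℝ) :
    kelvinMap (diagonal d) =
      diagonal ![d 0 ^ 2, d 1 ^ 2, d 2 ^ 2, d 1 * d 2, d 0 * d 2, d 0 * d 1] := by
  ext i j
  fin_cases i <;> fin_cases j <;> simp [kelvinMap]

theorem det_kelvinMap_diagonal (d : Fin 3 → ℝ) :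
    (kelvinMap (diagonal d)).det = (diagonal d).det ^ 4 := by
  rw [kelvinMap_diagonal, det_diagonal, det_diagonal]
  simp [Fin.prod_univ_succ]
  ring

theorem det_kelvinMap_transvection {i j : Fin 3} (hij : i ≠ j) (c : ℝ) :
    (kelvinMap (transvection i j c)).det = 1 := by
  have hsq : transvection i j (c + c) = transvection i j c * transvection i j c :=
    (transvection_mul_transvection_same i j hij c c).symm
  have hinv : transvection i j c * transvection i j (-c) = 1 := by
    rw [transvection_mul_transvection_same i j hij, add_neg_cancel, transvection_zero]
  -- Conjugation by the diagonal matrix with `2` in position `i` doubles the parameter.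
  have hconj : diagonal (Function.update (1 : Fin 3 → ℝ) i 2) * transvection i j c =
      transvection i j (c + c) * diagonal (Function.update (1 : Fin 3 → ℝ) i 2) := by
    ext a b
    fin_cases i <;> fin_cases j <;> fin_cases a <;> fin_cases b <;>
      simp [transvection] at hij ⊢ <;> ring
  have h1 := congrArg (fun M => (kelvinMap M).det) hconj
  have h2 := congrArg (fun M => (kelvinMap M).det) hinv
  simp only [hsq, kelvinMap_mul, det_mul, kelvinMap_one, det_one, det_kelvinMap_diagonal] at h1 h2
  have hD : (diagonal (Function.update (1 : Fin 3 → ℝ) i 2)).det = 2 := by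
    rw [det_diagonal, Finset.prod_update_of_mem (Finset.mem_univ i)]
    simp
  rw [hD] at h1
  have hx : (kelvinMap (transvection i j c)).det ≠ 0 := left_ne_zero_of_mul_eq_one h2
  apply mul_left_cancel₀ hx
  linarith

/-- The determinant of the second symmetric power in dimension three. -/
theorem det_kelvinMap (A : Matrix (Fin 3) (Fin 3) ℝ) (hA : A.det ≠ 0) :
    (kelvinMap A).det = A.det ^ 4 := by
  refine diagonal_transvection_induction_of_det_ne_zero
    (fun M => (kelvinMap M).det = M.det ^ 4) A hA
    (fun d _ => det_kelvinMap_diagonal d) (fun t => ?_) (fun M N _ _ hM hN => ?_)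
  · rw [TransvectionStruct.det, one_pow]
    exact det_kelvinMap_transvection t.hij t.c
  · rw [kelvinMap_mul, det_mul, det_mul, hM, hN, mul_pow]

/-- If `A` is a `3×3` real orthogonal matrix then `Ã(A)` is orthogonal,
and if moreover `det A = 1` then `det Ã(A) = 1`, i.e. `Ã(A) ∈ SO(6)`. -/
theorem kelvinMap_orthogonal (A : Matrix (Fin 3) (Fin 3) ℝ) (hA : A * Aᵀ = 1) :
    kelvinMap A * (kelvinMap A)ᵀ = 1 ∧ (A.det = 1 → (kelvinMap A).det = 1) := by
  refine ⟨?_, fun h => ?_⟩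
  · rw [← kelvinMap_transpose, ← kelvinMap_mul, hA, kelvinMap_one]
  · rw [det_kelvinMap A (by rw [h]; exact one_ne_zero), h, one_pow]
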